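/- Let p, q ≥ 1 and r > 1 be real numbers. Let B_1, B_2 : ℝ² → ℝ be linear maps and let J be a real positive semidefinite 2 × 2 matrix (possibly zero). For measurable f, g : ℝ → [0, ∞) define (f ⋆_{B_1,B_2,J} g)(x) = ∫_ℝ f(B_1(x, y)) g(B_2(x, y)) exp(−⟨(x, y), J (x, y)⟩) d_N y for x ∈ ℝ, and define C = sup{ ‖f ⋆_{B_1,B_2,J} g‖_{L^r(d_N)} : ‖f‖_{L^p(d_N)} = ‖g‖_{L^q(d_N)} = 1 }, the supremum taken in [0, ∞]. Then C = sup{ ‖f ⋆_{B_1,B_2,J} g‖_{L^r(d_N)} : ‖f‖_{L^p(d_N)} = ‖g‖_{L^q(d_N)} = 1, and f, g are centered Gaussian functions, i.e. f(x) = c_1 e^{−s x²/2} and g(x) = c_2 e^{−t x²/2} with c_1, c_2, s, t > 0 }. -/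

import Mathlib

open MeasureTheory Real Matrix

/-- The normalized Lebesgue measure `d_N x = (2π)^(−1/2) dx` on `ℝ`. -/
noncomputable def normalizedLebesgueR : Measure ℝ :=
  ENNReal.ofReal ((2 * Real.pi) ^ (-(1 : ℝ) / 2)) • (volume : Measure ℝ)

/-- The generalized Gaussian-weighted convolution
`(f ⋆_{B₁,B₂,J} g)(x) = ∫ f(B₁(x,y)) g(B₂(x,y)) exp(−⟨(x,y), J(x,y)⟩) d_N y`. -/
noncomputable def gaussConv (B₁ B₂ : (Fin 2 → ℝ) →ₗ[ℝ] ℝ)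
    (J : Matrix (Fin 2) (Fin 2) ℝ) (f g : ℝ → ℝ) : ℝ → ℝ :=
  fun x => ∫ y, f (B₁ ![x, y]) * g (B₂ ![x, y])
      * Real.exp (-(![x, y] ⬝ᵥ J.mulVec ![x, y])) ∂normalizedLebesgueR

namespace LiebAux
open Filter Topology Set

/-! ### Cumulative distribution functions and monotone transport on the line -/

lemma cdf_props (f : ℝ → ℝ) (hc : Continuous f) (hpos : ∀ x, 0 < f x) (hi : Integrable f) :
    ∃ F : ℝ → ℝ, (∀ x, HasDerivAt F (f x) x) ∧ StrictMono F ∧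
      (∀ x, F x ∈ Ioo 0 (∫ t, f t)) ∧ (∀ u ∈ Ioo 0 (∫ t, f t), ∃ x, F x = u) := by
  set F : ℝ → ℝ := fun x => ∫ t in Iic x, f t with hF
  have hd : ∀ x, HasDerivAt F (f x) x := by
    intro x
    have h1 : F = fun x => (∫ t in Iic (0:ℝ), f t) + ∫ t in (0:ℝ)..x, f t := by
      funext y
      have := intervalIntegral.integral_Iic_sub_Iic (a := 0) (b := y) (f := f) (μ := volume)
        hi.integrableOn hi.integrableOn
      simp only [hF]; linarith
    rw [h1]
    have := (intervalIntegral.integral_hasDerivAt_right (hc.intervalIntegrable 0 x)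
      hc.stronglyMeasurable.stronglyMeasurableAtFilter hc.continuousAt)
    exact this.const_add _
  have hm : StrictMono F := strictMono_of_hasDerivAt_pos hd hpos
  have hbot : Tendsto F atBot (𝓝 0) := tendsto_integral_Iic_zero tendsto_id
  have htop : Tendsto F atTop (𝓝 (∫ t, f t)) :=
    (aecover_Iic tendsto_id).integral_tendsto_of_countably_generated hi
  have hcont : Continuous F := continuous_iff_continuousAt.2 fun x => (hd x).continuousAt
  refine ⟨F, hd, hm, ?_, ?_⟩
  · intro x
    constructor
    · exact lt_of_le_of_lt (hm.monotone.le_of_tendsto hbot (x - 1)) (hm (by linarith))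
    · exact lt_of_lt_of_le (hm (show x < x + 1 by linarith)) (hm.monotone.ge_of_tendsto htop (x + 1))
  · rintro u ⟨h0, h1⟩
    obtain ⟨a, ha⟩ := (hbot.eventually (gt_mem_nhds h0)).exists
    obtain ⟨b, hb⟩ := (htop.eventually (lt_mem_nhds h1)).exists
    exact mem_range_of_exists_le_of_exists_ge hcont ⟨a, ha.le⟩ ⟨b, hb.le⟩

lemma transport (f g : ℝ → ℝ) (hcf : Continuous f) (hpf : ∀ x, 0 < f x) (hif : Integrable f)
    (hcg : Continuous g) (hpg : ∀ x, 0 < g x) (hig : Integrable g) (heq : ∫ t, f t = ∫ t, g t) :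
    ∃ T T' : ℝ → ℝ, (∀ x, HasDerivAt T (T' x) x) ∧ (∀ x, 0 < T' x) ∧ StrictMono T ∧
      ∀ x, f x = T' x * g (T x) := by
  obtain ⟨F, hFd, hFm, hFr, hFs⟩ := cdf_props f hcf hpf hif
  obtain ⟨G, hGd, hGm, hGr, hGs⟩ := cdf_props g hcg hpg hig
  have : ∀ x, ∃ y, G y = F x := fun x => hGs _ (heq ▸ hFr x)
  choose T hT using this
  have hTm : StrictMono T := by
    intro x y hxy
    rw [← hGm.lt_iff_lt, hT, hT]; exact hFm hxy
  have hTs : Function.Surjective T := by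
    intro y
    obtain ⟨x, hx⟩ := hFs (G y) (heq ▸ hGr y)
    exact ⟨x, hGm.injective (by rw [hT, hx])⟩
  have hTc : Continuous T := hTm.monotone.continuous_of_surjective hTs
  refine ⟨T, fun x => f x / g (T x), ?_, fun x => div_pos (hpf _) (hpg _), hTm, fun x => ?_⟩
  · intro x
    have hs : HasStrictDerivAt G (g (T x)) (T x) :=
      hasStrictDerivAt_of_hasDerivAt_of_continuousAt (Eventually.of_forall hGd) hcg.continuousAt
    have hne : g (T x) ≠ 0 := (hpg _).ne'
    have h1 := (hs.to_localInverse hne).hasDerivAt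
    rw [hT x] at h1
    have h2 := h1.comp x (hFd x)
    have h3 : ∀ᶠ y in 𝓝 x, T y = (hs.localInverse G (g (T x)) (T x) hne ∘ F) y := by
      have := hTc.continuousAt.eventually (hs.eventually_left_inverse hne)
      filter_upwards [this] with y hy
      simp only [Function.comp]
      rw [← hT y, hy]
    have := h2.congr_of_eventuallyEq h3
    simpa only [div_eq_inv_mul] using this
  · have := (hpg (T x)).ne'
    field_simp

/-! ### Gaussian integrals -/

lemma integral_quad (m k l : ℝ) (hm : 0 < m) :
    Integrable (fun y : ℝ => rexp (-(m * y ^ 2 + 2 * k * y + l) / 2)) ∧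
    ∫ y : ℝ, rexp (-(m * y ^ 2 + 2 * k * y + l) / 2)
      = √(2 * π / m) * rexp (-(l - k ^ 2 / m) / 2) := by
  have h1 : (fun y : ℝ => rexp (-(m * y ^ 2 + 2 * k * y + l) / 2))
      = fun y => rexp (-(l - k ^ 2 / m) / 2) * rexp (-(m / 2) * (y + k / m) ^ 2) := by
    funext y
    rw [← Real.exp_add]
    congr 1
    field_simp
    ring
  have hinteg := integrable_exp_neg_mul_sq (show 0 < m / 2 by positivity)
  rw [h1]
  refine ⟨(hinteg.comp_add_right (k / m)).const_mul _, ?_⟩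
  rw [integral_const_mul, integral_add_right_eq_self (fun y => rexp (-(m / 2) * y ^ 2)),
    integral_gaussian, mul_comm]
  congr 2
  field_simp

lemma lintegral_quad (m k l : ℝ) (hm : 0 < m) :
    ∫⁻ y : ℝ, ENNReal.ofReal (rexp (-(m * y ^ 2 + 2 * k * y + l) / 2))
      = ENNReal.ofReal (√(2 * π / m) * rexp (-(l - k ^ 2 / m) / 2)) := by
  rw [← (integral_quad m k l hm).2, ofReal_integral_eq_lintegral_ofReal (integral_quad m k l hm).1
    (Eventually.of_forall fun _ => (Real.exp_pos _).le)]

lemma lintegral_quad2 (a b c : ℝ) (hc : 0 < c) (hd : 0 < a * c - b ^ 2) :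
    ∫⁻ z : ℝ × ℝ, ENNReal.ofReal (rexp (-(a * z.1 ^ 2 + 2 * b * z.1 * z.2 + c * z.2 ^ 2) / 2))
      = ENNReal.ofReal (2 * π / √(a * c - b ^ 2)) := by
  rw [Measure.volume_eq_prod, lintegral_prod _ (by fun_prop)]
  have h1 : ∀ x : ℝ, ∫⁻ y : ℝ, ENNReal.ofReal
      (rexp (-(a * x ^ 2 + 2 * b * x * y + c * y ^ 2) / 2))
      = ENNReal.ofReal (√(2 * π / c)) *
        ENNReal.ofReal (rexp (-(((a * c - b ^ 2) / c) * x ^ 2 + 2 * 0 * x + 0) / 2)) := by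
    intro x
    rw [← ENNReal.ofReal_mul (by positivity)]
    have := lintegral_quad c (b * x) (a * x ^ 2) hc
    rw [show (a * c - b ^ 2) / c * x ^ 2 + 2 * 0 * x + 0 = a * x ^ 2 - (b * x) ^ 2 / c by
      field_simp; ring, ← this]
    congr 1; funext y; ring_nf
  simp only [h1]
  rw [lintegral_const_mul _ (by fun_prop), lintegral_quad _ _ _ (by positivity),
    ← ENNReal.ofReal_mul (by positivity)]
  congr 1
  simp only [ne_eq, OfNat.ofNat_ne_zero, not_false_eq_true, zero_pow, zero_div, sub_zero, neg_zero,
    Real.exp_zero, mul_one]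
  rw [← Real.sqrt_mul (by positivity),
    show 2 * π / c * (2 * π / ((a * c - b ^ 2) / c)) = (2 * π) ^ 2 / (a * c - b ^ 2) by
      field_simp, Real.sqrt_div (by positivity), Real.sqrt_sq (by positivity)]

end LiebAux
namespace LiebAux
open Filter Topology Set

/-! ### The transport argument -/

/-- Entries of the matrix `J + ∑ cᵢ τᵢ vᵢ vᵢᵀ`. -/
noncomputable def mEntry {ι : Type} [Fintype ι] (j : ℝ) (c u v τ : ι → ℝ) : ℝ :=
  j + ∑ i, c i * τ i * u i * v i

/-- Determinant of the matrix `J + ∑ cᵢ τᵢ vᵢ vᵢᵀ`. -/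
noncomputable def mDet {ι : Type} [Fintype ι] (j1 j2 j3 : ℝ) (c a b τ : ι → ℝ) : ℝ :=
  mEntry j1 c a a τ * mEntry j3 c b b τ - mEntry j2 c a b τ ^ 2

lemma quad_form_eq {ι : Type} [Fintype ι] (j1 j2 j3 : ℝ) (c a b τ : ι → ℝ) (x y : ℝ) :
    mEntry j1 c a a τ * x ^ 2 + 2 * mEntry j2 c a b τ * x * y + mEntry j3 c b b τ * y ^ 2
      = j1 * x ^ 2 + 2 * j2 * x * y + j3 * y ^ 2
        + ∑ i, c i * τ i * (a i * x + b i * y) ^ 2 := by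
  have : ∑ i, c i * τ i * (a i * x + b i * y) ^ 2
      = (∑ i, c i * τ i * a i * a i) * x ^ 2 + 2 * (∑ i, c i * τ i * a i * b i) * x * y
        + (∑ i, c i * τ i * b i * b i) * y ^ 2 := by
    simp only [Finset.mul_sum, Finset.sum_mul, ← Finset.sum_add_distrib]
    exact Finset.sum_congr rfl fun i _ => by ring
  rw [this]; unfold mEntry; ring

/-- Positive definiteness of all the matrices `J + ∑ cᵢ τᵢ vᵢ vᵢᵀ`, `τ > 0`. -/
def PD {ι : Type} [Fintype ι] (j1 j2 j3 : ℝ) (c a b : ι → ℝ) : Prop :=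
  ∀ τ : ι → ℝ, (∀ i, 0 < τ i) → ∀ x y : ℝ, (x ≠ 0 ∨ y ≠ 0) →
    0 < j1 * x ^ 2 + 2 * j2 * x * y + j3 * y ^ 2 + ∑ i, c i * τ i * (a i * x + b i * y) ^ 2

lemma PD.m1 {ι : Type} [Fintype ι] {j1 j2 j3 : ℝ} {c a b : ι → ℝ} (h : PD j1 j2 j3 c a b)
    {τ : ι → ℝ} (hτ : ∀ i, 0 < τ i) : 0 < mEntry j1 c a a τ := by
  have := h τ hτ 1 0 (by simp)
  rw [← quad_form_eq] at this
  simpa using this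

lemma PD.m3 {ι : Type} [Fintype ι] {j1 j2 j3 : ℝ} {c a b : ι → ℝ} (h : PD j1 j2 j3 c a b)
    {τ : ι → ℝ} (hτ : ∀ i, 0 < τ i) : 0 < mEntry j3 c b b τ := by
  have := h τ hτ 0 1 (by simp)
  rw [← quad_form_eq] at this
  simpa using this

lemma PD.det {ι : Type} [Fintype ι] {j1 j2 j3 : ℝ} {c a b : ι → ℝ} (h : PD j1 j2 j3 c a b)
    {τ : ι → ℝ} (hτ : ∀ i, 0 < τ i) : 0 < mDet j1 j2 j3 c a b τ := by
  have h1 := h.m1 hτ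
  have := h τ hτ (-mEntry j2 c a b τ) (mEntry j1 c a a τ) (Or.inr h1.ne')
  rw [← quad_form_eq] at this
  unfold mDet
  have h2 : 0 < mEntry j1 c a a τ * (mEntry j1 c a a τ * mEntry j3 c b b τ
      - mEntry j2 c a b τ ^ 2) := by
    convert this using 1; ring
  exact (mul_pos_iff_of_pos_left h1).1 h2

lemma key_quad {ι : Type} [Fintype ι] {j1 j2 j3 : ℝ} {c a b : ι → ℝ}
    (hJ : ∀ x y, 0 ≤ j1 * x ^ 2 + 2 * j2 * x * y + j3 * y ^ 2) (hc : ∀ i, 0 < c i)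
    (h : PD j1 j2 j3 c a b)
    {σ : ι → ℝ} (hσ : ∀ i, 0 < σ i) (x y : ℝ) (t : ι → ℝ) (X Y : ℝ)
    (hX : X = j1 * x + j2 * y + ∑ i, c i * σ i * a i * t i)
    (hY : Y = j2 * x + j3 * y + ∑ i, c i * σ i * b i * t i) :
    mEntry j3 c b b σ / mDet j1 j2 j3 c a b σ * X ^ 2
      + 2 * (-mEntry j2 c a b σ / mDet j1 j2 j3 c a b σ) * X * Y
      + mEntry j1 c a a σ / mDet j1 j2 j3 c a b σ * Y ^ 2
      ≤ j1 * x ^ 2 + 2 * j2 * x * y + j3 * y ^ 2 + ∑ i, c i * σ i * t i ^ 2 := by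
  have hd := h.det hσ
  set d := mDet j1 j2 j3 c a b σ with hdd
  set m1 := mEntry j1 c a a σ with hm1
  set m2 := mEntry j2 c a b σ with hm2
  set m3 := mEntry j3 c b b σ with hm3
  have hdd' : d = m1 * m3 - m2 ^ 2 := rfl
  set w := (m3 * X - m2 * Y) / d with hw
  set v := (m1 * Y - m2 * X) / d with hv
  have hs : 0 ≤ ∑ i, c i * σ i * (t i - (a i * w + b i * v)) ^ 2 :=
    Finset.sum_nonneg fun i _ => mul_nonneg (mul_pos (hc i) (hσ i)).le (sq_nonneg _)
  have hj := hJ (x - w) (y - v)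
  have hq := quad_form_eq j1 j2 j3 c a b σ w v
  rw [← hm1, ← hm2, ← hm3] at hq
  have he : ∑ i, c i * σ i * (t i - (a i * w + b i * v)) ^ 2
      = ∑ i, c i * σ i * t i ^ 2 - 2 * w * (∑ i, c i * σ i * a i * t i)
        - 2 * v * (∑ i, c i * σ i * b i * t i) + ∑ i, c i * σ i * (a i * w + b i * v) ^ 2 := by
    simp only [Finset.mul_sum, ← Finset.sum_add_distrib, ← Finset.sum_sub_distrib]
    exact Finset.sum_congr rfl fun i _ => by ring
  have e1 : ∑ i, c i * σ i * a i * t i = X - j1 * x - j2 * y := by rw [hX]; ring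
  have e2 : ∑ i, c i * σ i * b i * t i = Y - j2 * x - j3 * y := by rw [hY]; ring
  rw [he, e1, e2] at hs
  have hw1 : m1 * w + m2 * v = X := by
    rw [hw, hv]; field_simp; rw [hdd']; ring
  have hv1 : m2 * w + m3 * v = Y := by
    rw [hw, hv]; field_simp; rw [hdd']; ring
  have hl : m3 / d * X ^ 2 + 2 * (-m2 / d) * X * Y + m1 / d * Y ^ 2 = w * X + v * Y := by
    rw [hw, hv]; ring
  rw [hl]
  have hq2 : m1 * w ^ 2 + 2 * m2 * w * v + m3 * v ^ 2 = w * X + v * Y := by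
    rw [← hw1, ← hv1]; ring
  nlinarith [hs, hj, hq, hq2]

lemma core {ι : Type} [Fintype ι] {j1 j2 j3 : ℝ} {c a b : ι → ℝ}
    (hJ : ∀ x y, 0 ≤ j1 * x ^ 2 + 2 * j2 * x * y + j3 * y ^ 2) (hc : ∀ i, 0 < c i)
    (h : PD j1 j2 j3 c a b) (D : ℝ)
    (hD : ∀ τ : ι → ℝ, (∀ i, 0 < τ i) → ∏ i, τ i ^ c i ≤ D * mDet j1 j2 j3 c a b τ)
    (f : ι → ℝ → ℝ) (hfc : ∀ i, Continuous (f i)) (hfp : ∀ i x, 0 < f i x)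
    (hfi : ∀ i, Integrable (f i)) (hf1 : ∀ i, ∫ x, f i x = √(2 * π))
    {σ : ι → ℝ} (hσ : ∀ i, 0 < σ i) :
    ∫⁻ z : ℝ × ℝ, ENNReal.ofReal ((∏ i, f i (a i * z.1 + b i * z.2) ^ c i)
        * rexp (-(j1 * z.1 ^ 2 + 2 * j2 * z.1 * z.2 + j3 * z.2 ^ 2) / 2))
      ≤ ENNReal.ofReal (D * (∏ i, σ i ^ (-(c i / 2))) * (2 * π * √(mDet j1 j2 j3 c a b σ))) := by
  -- the transport maps
  have hT : ∀ i, ∃ T T' : ℝ → ℝ, (∀ x, HasDerivAt T (T' x) x) ∧ (∀ x, 0 < T' x) ∧ StrictMono T ∧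
      ∀ x, f i x = T' x * (√(σ i) * rexp (-(σ i * (T x) ^ 2) / 2)) := by
    intro i
    have hq := integral_quad (σ i) 0 0 (hσ i)
    simp only [mul_zero, zero_mul, add_zero] at hq
    refine transport (f i) (fun x => √(σ i) * rexp (-(σ i * x ^ 2) / 2)) (hfc i) (hfp i) (hfi i)
      (by fun_prop) (fun x => mul_pos (Real.sqrt_pos.2 (hσ i)) (Real.exp_pos _))
      (hq.1.const_mul _) ?_
    rw [hf1, integral_const_mul, hq.2]
    simp only [ne_eq, OfNat.ofNat_ne_zero, not_false_eq_true, zero_pow, zero_div, sub_zero,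
      neg_zero, Real.exp_zero, mul_one]
    rw [← Real.sqrt_mul (hσ i).le]
    congr 1
    have := (hσ i).ne'
    field_simp
  choose T T' hTd hTp hTm hTe using hT
  set Θ : ℝ × ℝ → ℝ × ℝ := fun z =>
    (j1 * z.1 + j2 * z.2 + ∑ i, c i * σ i * a i * T i (a i * z.1 + b i * z.2),
     j2 * z.1 + j3 * z.2 + ∑ i, c i * σ i * b i * T i (a i * z.1 + b i * z.2)) with hΘ
  set τ : ℝ × ℝ → ι → ℝ := fun z i => σ i * T' i (a i * z.1 + b i * z.2) with hτ
  have hτp : ∀ z i, 0 < τ z i := fun z i => mul_pos (hσ i) (hTp i _)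
  set Θ' : ℝ × ℝ → ℝ × ℝ →L[ℝ] ℝ × ℝ := fun z =>
    (Matrix.toLin (.finTwoProd ℝ) (.finTwoProd ℝ)
    !![mEntry j1 c a a (τ z), mEntry j2 c a b (τ z);
       mEntry j2 c a b (τ z), mEntry j3 c b b (τ z)]).toContinuousLinearMap with hΘ'
  have hdet : ∀ z, (Θ' z).det = mDet j1 j2 j3 c a b (τ z) := by
    intro z
    simp only [hΘ', LinearMap.det_toContinuousLinearMap, LinearMap.det_toLin,
      Matrix.det_fin_two_of, mDet]
    ring
  have hder : ∀ z, HasFDerivAt Θ (Θ' z) z := by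
    intro z
    have hlin : ∀ u v : ℝ, HasFDerivAt (fun z : ℝ × ℝ => u * z.1 + v * z.2)
        (u • ContinuousLinearMap.fst ℝ ℝ ℝ + v • ContinuousLinearMap.snd ℝ ℝ ℝ) z := fun u v =>
      (hasFDerivAt_fst.const_mul u).add (hasFDerivAt_snd.const_mul v)
    have hTi : ∀ i (e : ℝ), HasFDerivAt
        (fun z : ℝ × ℝ => e * T i (a i * z.1 + b i * z.2))
        (e • (T' i (a i * z.1 + b i * z.2) • (a i • ContinuousLinearMap.fst ℝ ℝ ℝ
          + b i • ContinuousLinearMap.snd ℝ ℝ ℝ))) z := fun i e =>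
      ((hTd i _).comp_hasFDerivAt z (hlin (a i) (b i))).const_mul e
    have hc1 := (hlin j1 j2).add (HasFDerivAt.fun_sum (u := Finset.univ)
      fun i _ => hTi i (c i * σ i * a i))
    have hc2 := (hlin j2 j3).add (HasFDerivAt.fun_sum (u := Finset.univ)
      fun i _ => hTi i (c i * σ i * b i))
    have h12 := hc1.prodMk hc2
    refine h12.congr_fderiv ?_
    apply ContinuousLinearMap.ext
    rintro ⟨x, y⟩
    simp only [hΘ', Matrix.toLin_finTwoProd_toContinuousLinearMap]
    simp only [ContinuousLinearMap.prod_apply, _root_.add_apply,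
      _root_.sum_apply, _root_.smul_apply, smul_eq_mul,
      ContinuousLinearMap.coe_fst', ContinuousLinearMap.coe_snd', mEntry, hτ]
    refine Prod.ext ?_ ?_
    · simp only [add_mul, Finset.sum_mul]
      rw [add_add_add_comm, ← Finset.sum_add_distrib]
      congr 1
      exact Finset.sum_congr rfl fun i _ => by ring
    · simp only [add_mul, Finset.sum_mul]
      rw [add_add_add_comm, ← Finset.sum_add_distrib]
      congr 1
      exact Finset.sum_congr rfl fun i _ => by ring
  have hinj : Function.Injective Θ := by
    intro z z' hz
    by_contra hne
    have hne' : z.1 - z'.1 ≠ 0 ∨ z.2 - z'.2 ≠ 0 := by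
      by_contra hh
      push Not at hh
      exact hne (Prod.ext (sub_eq_zero.1 hh.1) (sub_eq_zero.1 hh.2))
    have hsl : ∀ i, ∃ s : ℝ, 0 < s ∧ T i (a i * z.1 + b i * z.2) - T i (a i * z'.1 + b i * z'.2)
        = s * (a i * (z.1 - z'.1) + b i * (z.2 - z'.2)) := by
      intro i
      set u := a i * z.1 + b i * z.2
      set u' := a i * z'.1 + b i * z'.2
      have huu : a i * (z.1 - z'.1) + b i * (z.2 - z'.2) = u - u' := by ring
      rw [huu]
      rcases lt_trichotomy u u' with h1 | h1 | h1
      · exact ⟨(T i u - T i u') / (u - u'),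
          div_pos_of_neg_of_neg (sub_neg.2 (hTm i h1)) (sub_neg.2 h1),
          by field_simp [(sub_neg.2 h1).ne]⟩
      · exact ⟨1, one_pos, by rw [h1]; ring⟩
      · exact ⟨(T i u - T i u') / (u - u'),
          div_pos (sub_pos.2 (hTm i h1)) (sub_pos.2 h1),
          by field_simp [(sub_pos.2 h1).ne']⟩
    choose s hs0 hs using hsl
    have hpos := h (fun i => σ i * s i) (fun i => mul_pos (hσ i) (hs0 i)) _ _ hne'
    have h1 : (Θ z).1 - (Θ z').1 = 0 := by rw [hz]; ring
    have h2 : (Θ z).2 - (Θ z').2 = 0 := by rw [hz]; ring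
    have hsum : ∑ i, c i * (σ i * s i) * (a i * (z.1 - z'.1) + b i * (z.2 - z'.2)) ^ 2
        = (z.1 - z'.1) * (∑ i, c i * σ i * a i * T i (a i * z.1 + b i * z.2)
            - ∑ i, c i * σ i * a i * T i (a i * z'.1 + b i * z'.2))
          + (z.2 - z'.2) * (∑ i, c i * σ i * b i * T i (a i * z.1 + b i * z.2)
            - ∑ i, c i * σ i * b i * T i (a i * z'.1 + b i * z'.2)) := by
      rw [← Finset.sum_sub_distrib, ← Finset.sum_sub_distrib, Finset.mul_sum, Finset.mul_sum,
        ← Finset.sum_add_distrib]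
      refine Finset.sum_congr rfl fun i _ => ?_
      have e := hs i
      calc c i * (σ i * s i) * (a i * (z.1 - z'.1) + b i * (z.2 - z'.2)) ^ 2
          = c i * σ i * (a i * (z.1 - z'.1) + b i * (z.2 - z'.2)) *
            (s i * (a i * (z.1 - z'.1) + b i * (z.2 - z'.2))) := by ring
        _ = _ := by rw [← e]; ring
    rw [hsum] at hpos
    simp only [hΘ] at h1 h2
    refine absurd hpos (not_lt.2 (le_of_eq ?_))
    linear_combination (z.1 - z'.1) * h1 + (z.2 - z'.2) * h2
  -- pointwise bound
  set m1 := mEntry j1 c a a σ with hm1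
  set m2 := mEntry j2 c a b σ with hm2
  set m3 := mEntry j3 c b b σ with hm3
  set d := mDet j1 j2 j3 c a b σ with hd
  have hdpos : 0 < d := h.det hσ
  have hdm : d = m1 * m3 - m2 ^ 2 := rfl
  set φ : ℝ × ℝ → ℝ := fun w =>
    rexp (-(m3 / d * w.1 ^ 2 + 2 * (-m2 / d) * w.1 * w.2 + m1 / d * w.2 ^ 2) / 2) with hφ
  set K : ℝ := D * (∏ i, σ i ^ (-(c i / 2))) with hK
  have hDnn : 0 ≤ D := by
    have h1 := hD σ hσ
    have h2 : 0 < ∏ i, σ i ^ c i := Finset.prod_pos fun i _ => Real.rpow_pos_of_pos (hσ i) _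
    by_contra hneg
    push Not at hneg
    nlinarith [h.det hσ]
  have hKnn : 0 ≤ K := mul_nonneg hDnn
    (Finset.prod_nonneg fun i _ => Real.rpow_nonneg (hσ i).le _)
  have hpt : ∀ z : ℝ × ℝ, (∏ i, f i (a i * z.1 + b i * z.2) ^ c i)
        * rexp (-(j1 * z.1 ^ 2 + 2 * j2 * z.1 * z.2 + j3 * z.2 ^ 2) / 2)
      ≤ K * (|(Θ' z).det| * φ (Θ z)) := by
    intro z
    have hp1 : ∀ i, f i (a i * z.1 + b i * z.2) ^ c i
        = τ z i ^ c i * σ i ^ (-(c i / 2))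
          * rexp (-(c i * σ i * T i (a i * z.1 + b i * z.2) ^ 2) / 2) := by
      intro i
      set u := a i * z.1 + b i * z.2 with hu
      rw [hTe i u]
      simp only [hτ]
      rw [← hu]
      rw [Real.mul_rpow (hTp i u).le (by positivity), Real.mul_rpow (by positivity) (by positivity),
        Real.mul_rpow (hσ i).le (hTp i u).le, Real.sqrt_eq_rpow, ← Real.rpow_mul (hσ i).le,
        ← Real.exp_mul]
      have e1 : σ i ^ (1 / 2 * c i) = σ i ^ c i * σ i ^ (-(c i / 2)) := by
        rw [← Real.rpow_add (hσ i)]; congr 1; ring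
      rw [e1]
      have e2 : -(σ i * T i u ^ 2) / 2 * c i = -(c i * σ i * T i u ^ 2) / 2 := by ring
      rw [e2]; ring
    have hp2 : (∏ i, f i (a i * z.1 + b i * z.2) ^ c i)
        = (∏ i, τ z i ^ c i) * (∏ i, σ i ^ (-(c i / 2)))
          * rexp (-(∑ i, c i * σ i * T i (a i * z.1 + b i * z.2) ^ 2) / 2) := by
      simp only [hp1]
      rw [Finset.prod_mul_distrib, Finset.prod_mul_distrib, ← Real.exp_sum, ← Finset.sum_div,
        Finset.sum_neg_distrib]
    rw [hp2, hdet z, abs_of_pos (h.det (hτp z)), mul_assoc, ← Real.exp_add]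
    have hkq := key_quad hJ hc h hσ z.1 z.2 (fun i => T i (a i * z.1 + b i * z.2))
      (Θ z).1 (Θ z).2 rfl rfl
    have hexp : rexp (-(∑ i, c i * σ i * T i (a i * z.1 + b i * z.2) ^ 2) / 2
        + -(j1 * z.1 ^ 2 + 2 * j2 * z.1 * z.2 + j3 * z.2 ^ 2) / 2) ≤ φ (Θ z) := by
      simp only [hφ]
      rw [Real.exp_le_exp]
      linarith [hkq]
    have hDz := hD (τ z) (hτp z)
    have hP : 0 ≤ ∏ i, σ i ^ (-(c i / 2)) :=
      Finset.prod_nonneg fun i _ => Real.rpow_nonneg (hσ i).le _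
    calc (∏ i, τ z i ^ c i) * (∏ i, σ i ^ (-(c i / 2))) *
          rexp (-(∑ i, c i * σ i * T i (a i * z.1 + b i * z.2) ^ 2) / 2
            + -(j1 * z.1 ^ 2 + 2 * j2 * z.1 * z.2 + j3 * z.2 ^ 2) / 2)
        ≤ (D * mDet j1 j2 j3 c a b (τ z)) * (∏ i, σ i ^ (-(c i / 2))) * φ (Θ z) := by
          have := (h.det (hτp z)).le
          gcongr
      _ = _ := by rw [hK]; ring
  have hcv := lintegral_image_eq_lintegral_abs_det_fderiv_mul (volume : Measure (ℝ × ℝ))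
    MeasurableSet.univ (fun z _ => (hder z).hasFDerivWithinAt) hinj.injOn
    (fun w => ENNReal.ofReal (φ w))
  rw [Measure.restrict_univ] at hcv
  have hgi : ∫⁻ w : ℝ × ℝ, ENNReal.ofReal (φ w) = ENNReal.ofReal (2 * π * √d) := by
    have e : m3 / d * (m1 / d) - (-m2 / d) ^ 2 = 1 / d := by
      field_simp; rw [hdm]; ring
    have := lintegral_quad2 (m3 / d) (-m2 / d) (m1 / d) (div_pos (h.m1 hσ) hdpos)
      (by rw [e]; positivity)
    rw [e, Real.sqrt_div zero_le_one, Real.sqrt_one, div_div_eq_mul_div, div_one] at this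
    exact this
  calc _ ≤ ∫⁻ z : ℝ × ℝ, ENNReal.ofReal K * (ENNReal.ofReal |(Θ' z).det| *
            ENNReal.ofReal (φ (Θ z))) := by
          refine lintegral_mono fun z => ?_
          rw [← ENNReal.ofReal_mul (abs_nonneg _), ← ENNReal.ofReal_mul hKnn]
          exact ENNReal.ofReal_le_ofReal (hpt z)
    _ = ENNReal.ofReal K * ∫⁻ w in Θ '' univ, ENNReal.ofReal (φ w) := by
          rw [lintegral_const_mul' _ _ ENNReal.ofReal_ne_top, hcv]
    _ ≤ ENNReal.ofReal K * ∫⁻ w, ENNReal.ofReal (φ w) := by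
          gcongr; exact Measure.restrict_le_self
    _ = _ := by rw [hgi, ← ENNReal.ofReal_mul hKnn]

end LiebAux
namespace LiebAux
open Filter Topology Set

/-! ### Approximation -/

lemma ae_lin (u v : ℝ) (h : u ≠ 0 ∨ v ≠ 0) (P : ℝ → Prop) (hP : ∀ᵐ x : ℝ, P x) :
    ∀ᵐ z : ℝ × ℝ, P (u * z.1 + v * z.2) := by
  have key : ∀ e1 e2 : ℝ, u * e2 - v * e1 ≠ 0 → ∀ᵐ z : ℝ × ℝ, P (u * z.1 + v * z.2) := by
    intro e1 e2 hne
    set L : ℝ × ℝ →L[ℝ] ℝ × ℝ := (Matrix.toLin (.finTwoProd ℝ) (.finTwoProd ℝ)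
      !![u, v; e1, e2]).toContinuousLinearMap with hL
    have hdet : L.det ≠ 0 := by
      simpa only [hL, LinearMap.det_toContinuousLinearMap, LinearMap.det_toLin,
        Matrix.det_fin_two_of] using hne
    have hq := _root_.MeasureTheory.Measure.ContinuousLinearMap.quasiMeasurePreserving (volume : Measure (ℝ × ℝ)) L hdet
    have hq2 : Measure.QuasiMeasurePreserving (Prod.fst : ℝ × ℝ → ℝ) volume volume :=
      Measure.quasiMeasurePreserving_fst
    have := (hq2.comp hq).ae hP
    filter_upwards [this] with z hz
    have e : (L z).1 = u * z.1 + v * z.2 := by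
      simp only [hL, Matrix.toLin_finTwoProd_toContinuousLinearMap]
      simp
    simpa only [Function.comp, e] using hz
  rcases h with h | h
  · exact key 0 1 (by simpa using h)
  · exact key 1 0 (by simpa using h)

lemma approx (F : ℝ → ℝ) (hF0 : ∀ x, 0 ≤ F x) (hFi : Integrable F)
    (hF1 : ∫ x, F x = √(2 * π)) :
    ∃ G : ℕ → ℝ → ℝ, (∀ n, Continuous (G n)) ∧ (∀ n x, 0 < G n x) ∧ (∀ n, Integrable (G n)) ∧
      (∀ n, ∫ x, G n x = √(2 * π)) ∧
      ∀ᵐ x, Tendsto (fun n => G n x) atTop (𝓝 (F x)) := by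
  have h2π : 0 < √(2 * π) := Real.sqrt_pos.2 (by positivity)
  have hex : ∀ n : ℕ, ∃ g : ℝ → ℝ, (∫⁻ x, ‖F x - g x‖ₑ ≤ ((n : ENNReal) + 1)⁻¹) ∧ Continuous g ∧
      Integrable g := by
    intro n
    obtain ⟨g, -, h1, h2, h3⟩ := hFi.exists_hasCompactSupport_lintegral_sub_le
      (ε := ((n : ENNReal) + 1)⁻¹) (by simp)
    exact ⟨g, h1, h2, h3⟩
  choose g hg1 hgc hgi using hex
  have hlim0 : Tendsto (fun n : ℕ => ((n : ENNReal) + 1)⁻¹) atTop (𝓝 0) := by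
    have := (tendsto_add_atTop_iff_nat 1).2 ENNReal.tendsto_inv_nat_nhds_zero
    simpa using this
  have hL1 : Tendsto (fun n => ∫⁻ x, ‖g n x - F x‖ₑ) atTop (𝓝 0) := by
    refine tendsto_of_tendsto_of_tendsto_of_le_of_le tendsto_const_nhds hlim0 (fun _ => zero_le)
      fun n => ?_
    refine le_trans (le_of_eq ?_) (hg1 n)
    congr 1; funext x
    rw [← enorm_neg]; congr 1; ring
  have hm : TendstoInMeasure volume g atTop F := by
    refine tendstoInMeasure_of_tendsto_eLpNorm (p := 1) one_ne_zero
      (fun n => (hgi n).aestronglyMeasurable) hFi.aestronglyMeasurable ?_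
    simpa only [eLpNorm_one_eq_lintegral_enorm, Pi.sub_apply] using hL1
  obtain ⟨ns, hns, hae⟩ := hm.exists_seq_tendsto_ae
  set e : ℝ → ℝ := fun x => rexp (-1 * x ^ 2) with he
  have hei : Integrable e := integrable_exp_neg_mul_sq one_pos
  set H : ℕ → ℝ → ℝ := fun n x => |g (ns n) x| + (1 / ((n : ℝ) + 1)) * e x with hH
  have hHc : ∀ n, Continuous (H n) := fun n => by
    have := hgc (ns n)
    simp only [hH, he]; fun_prop
  have hHp : ∀ n x, 0 < H n x := fun n x => by
    have : 0 < (1 / ((n : ℝ) + 1)) * e x := by simp only [he]; positivity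
    simp only [hH]; positivity
  have hHi : ∀ n, Integrable (H n) := fun n => ((hgi (ns n)).abs).add (hei.const_mul _)
  have hone : Tendsto (fun n : ℕ => 1 / ((n : ℝ) + 1)) atTop (𝓝 0) :=
    tendsto_one_div_add_atTop_nhds_zero_nat
  have hHae : ∀ᵐ x, Tendsto (fun n => H n x) atTop (𝓝 (F x)) := by
    filter_upwards [hae] with x hx
    have := hx.abs.add (hone.mul_const (e x))
    simpa only [abs_of_nonneg (hF0 x), zero_mul, add_zero] using this
  have hIg : Tendsto (fun n => ∫ x, |g (ns n) x|) atTop (𝓝 (∫ x, F x)) := by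
    refine tendsto_integral_of_L1 F hFi.aestronglyMeasurable (Eventually.of_forall fun n => (hgi (ns n)).abs) ?_
    refine tendsto_of_tendsto_of_tendsto_of_le_of_le tendsto_const_nhds
      (hL1.comp hns.tendsto_atTop) (fun _ => zero_le) fun n => ?_
    refine lintegral_mono fun x => ?_
    rw [← ofReal_norm, ← ofReal_norm]
    refine ENNReal.ofReal_le_ofReal ?_
    rw [Real.norm_eq_abs, Real.norm_eq_abs]
    conv_lhs => rw [← abs_of_nonneg (hF0 x)]
    exact abs_abs_sub_abs_le _ _
  have hIH : Tendsto (fun n => ∫ x, H n x) atTop (𝓝 √(2 * π)) := by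
    have h1 : ∀ n, ∫ x, H n x = (∫ x, |g (ns n) x|) + 1 / ((n : ℝ) + 1) * ∫ x, e x := fun n => by
      simp only [hH]
      rw [integral_add (hgi (ns n)).abs (hei.const_mul _), integral_const_mul]
    simp only [h1]
    have := hIg.add (hone.mul_const (∫ x, e x))
    rw [hF1] at this
    simpa only [zero_mul, add_zero] using this
  have hIpos : ∀ n, 0 < ∫ x, H n x := fun n => by
    rw [integral_pos_iff_support_of_nonneg (fun x => (hHp n x).le) (hHi n)]
    have : Function.support (H n) = univ := by
      ext x; simp [(hHp n x).ne']
    rw [this]; simp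
  refine ⟨fun n x => (√(2 * π) / ∫ y, H n y) * H n x, fun n => (hHc n).const_mul _,
    fun n x => mul_pos (div_pos h2π (hIpos n)) (hHp n x), fun n => (hHi n).const_mul _, fun n => ?_,
    ?_⟩
  · rw [integral_const_mul, div_mul_cancel₀ _ (hIpos n).ne']
  · filter_upwards [hHae] with x hx
    have := (tendsto_const_nhds (x := √(2 * π))).div hIH h2π.ne'
    have := this.mul hx
    simpa only [div_self h2π.ne', one_mul, Pi.div_apply] using this

lemma extend {ι : Type} [Fintype ι] (c a b : ι → ℝ) (hc : ∀ i, 0 < c i)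
    (hab : ∀ i, a i ≠ 0 ∨ b i ≠ 0) (k : ℝ × ℝ → ℝ) (hk : Measurable k) (C : ENNReal)
    (hC : ∀ f : ι → ℝ → ℝ, (∀ i, Continuous (f i)) → (∀ i x, 0 < f i x) →
      (∀ i, Integrable (f i)) → (∀ i, ∫ x, f i x = √(2 * π)) →
      ∫⁻ z : ℝ × ℝ, ENNReal.ofReal ((∏ i, f i (a i * z.1 + b i * z.2) ^ c i) * k z) ≤ C)
    (F : ι → ℝ → ℝ) (hF0 : ∀ i x, 0 ≤ F i x) (hFi : ∀ i, Integrable (F i))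
    (hF1 : ∀ i, ∫ x, F i x = √(2 * π)) :
    ∫⁻ z : ℝ × ℝ, ENNReal.ofReal ((∏ i, F i (a i * z.1 + b i * z.2) ^ c i) * k z) ≤ C := by
  choose G hGc hGp hGi hG1 hGae using fun i => approx (F i) (hF0 i) (hFi i) (hF1 i)
  have hae : ∀ᵐ z : ℝ × ℝ, ∀ i, Tendsto (fun n => G i n (a i * z.1 + b i * z.2)) atTop
      (𝓝 (F i (a i * z.1 + b i * z.2))) :=
    ae_all_iff.2 fun i => ae_lin (a i) (b i) (hab i)
      (fun x => Tendsto (fun n => G i n x) atTop (𝓝 (F i x))) (hGae i)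
  set Φ : ℕ → ℝ × ℝ → ENNReal := fun n z =>
    ENNReal.ofReal ((∏ i, G i n (a i * z.1 + b i * z.2) ^ c i) * k z) with hΦ
  have hΦm : ∀ n, Measurable (Φ n) := by
    intro n
    refine ENNReal.measurable_ofReal.comp (Measurable.mul ?_ hk)
    refine Finset.measurable_fun_prod _ fun i _ => ?_
    have : Measurable fun z : ℝ × ℝ => G i n (a i * z.1 + b i * z.2) :=
      (hGc i n).measurable.comp (by fun_prop)
    exact this.pow_const _
  calc _ = ∫⁻ z, liminf (fun n => Φ n z) atTop := by
        refine lintegral_congr_ae ?_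
        filter_upwards [hae] with z hz
        refine (Tendsto.liminf_eq ?_).symm
        refine ENNReal.tendsto_ofReal (Tendsto.mul_const _ ?_)
        exact tendsto_finsetProd _ fun i _ =>
          (hz i).rpow_const (Or.inr (hc i).le)
    _ ≤ liminf (fun n => ∫⁻ z, Φ n z) atTop := lintegral_liminf_le hΦm
    _ ≤ C := by
        refine liminf_le_of_frequently_le' (Frequently.of_forall fun n => ?_)
        exact hC (fun i => G i n) (fun i => hGc i n) (fun i => hGp i n) (fun i => hGi i n)
          (fun i => hG1 i n)

lemma brascampLieb {ι : Type} [Fintype ι] {j1 j2 j3 : ℝ} {c a b : ι → ℝ}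
    (hJ : ∀ x y, 0 ≤ j1 * x ^ 2 + 2 * j2 * x * y + j3 * y ^ 2) (hc : ∀ i, 0 < c i)
    (hab : ∀ i, a i ≠ 0 ∨ b i ≠ 0)
    (h : PD j1 j2 j3 c a b) (C : ℝ)
    (hC : ∀ τ : ι → ℝ, (∀ i, 0 < τ i) →
      (∏ i, τ i ^ (c i / 2)) / √(mDet j1 j2 j3 c a b τ) ≤ C)
    (F : ι → ℝ → ℝ) (hF0 : ∀ i x, 0 ≤ F i x) (hFi : ∀ i, Integrable (F i))
    (hF1 : ∀ i, ∫ x, F i x = √(2 * π)) :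
    ∫⁻ z : ℝ × ℝ, ENNReal.ofReal ((∏ i, F i (a i * z.1 + b i * z.2) ^ c i)
        * rexp (-(j1 * z.1 ^ 2 + 2 * j2 * z.1 * z.2 + j3 * z.2 ^ 2) / 2))
      ≤ ENNReal.ofReal (2 * π * C) := by
  refine extend c a b hc hab _ (by fun_prop) _ ?_ F hF0 hFi hF1
  intro f hfc hfp hfi hf1
  set I : (ι → ℝ) → ℝ := fun τ => (∏ i, τ i ^ (c i / 2)) / √(mDet j1 j2 j3 c a b τ) with hI
  have hIpos : ∀ τ : ι → ℝ, (∀ i, 0 < τ i) → 0 < I τ := fun τ hτ =>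
    div_pos (Finset.prod_pos fun i _ => Real.rpow_pos_of_pos (hτ i) _)
      (Real.sqrt_pos.2 (h.det hτ))
  set A : Set ℝ := I '' {τ | ∀ i, 0 < τ i} with hA
  have hAne : A.Nonempty := ⟨_, mem_image_of_mem I (show (fun _ => (1:ℝ)) ∈ _ from fun _ => one_pos)⟩
  have hAb : BddAbove A := ⟨C, by rintro _ ⟨τ, hτ, rfl⟩; exact hC τ hτ⟩
  set S := sSup A with hS
  have hle : ∀ τ : ι → ℝ, (∀ i, 0 < τ i) → I τ ≤ S := fun τ hτ =>
    le_csSup hAb (mem_image_of_mem I hτ)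
  have hSpos : 0 < S := lt_of_lt_of_le (hIpos (fun _ => 1) fun _ => one_pos)
    (hle _ fun _ => one_pos)
  have hSC : S ≤ C := csSup_le hAne (by rintro _ ⟨τ, hτ, rfl⟩; exact hC τ hτ)
  have hD : ∀ τ : ι → ℝ, (∀ i, 0 < τ i) → ∏ i, τ i ^ c i ≤ S ^ 2 * mDet j1 j2 j3 c a b τ := by
    intro τ hτ
    have h1 := hle τ hτ
    have hd := h.det hτ
    have h2 : ∏ i, τ i ^ c i = (∏ i, τ i ^ (c i / 2)) ^ 2 := by
      rw [← Finset.prod_pow]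
      refine Finset.prod_congr rfl fun i _ => ?_
      rw [← Real.rpow_natCast, ← Real.rpow_mul (hτ i).le]
      congr 1; push_cast; ring
    have h3 : (I τ) ^ 2 * mDet j1 j2 j3 c a b τ = ∏ i, τ i ^ c i := by
      rw [h2, hI]
      simp only [div_pow]
      rw [Real.sq_sqrt hd.le, div_mul_cancel₀ _ hd.ne']
    rw [← h3]
    have := hIpos τ hτ
    gcongr
  set L := ∫⁻ z : ℝ × ℝ, ENNReal.ofReal ((∏ i, f i (a i * z.1 + b i * z.2) ^ c i)
        * rexp (-(j1 * z.1 ^ 2 + 2 * j2 * z.1 * z.2 + j3 * z.2 ^ 2) / 2)) with hL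
  have hLb : ∀ σ : ι → ℝ, (∀ i, 0 < σ i) → L ≤ ENNReal.ofReal (2 * π * (S ^ 2 / I σ)) := by
    intro σ hσ
    refine (core hJ hc h (S ^ 2) hD f hfc hfp hfi hf1 hσ).trans (le_of_eq ?_)
    congr 1
    have e : ∏ i, σ i ^ (-(c i / 2)) = (∏ i, σ i ^ (c i / 2))⁻¹ := by
      rw [← Finset.prod_inv_distrib]
      exact Finset.prod_congr rfl fun i _ => Real.rpow_neg (hσ i).le _
    rw [e, hI]
    simp only [div_div_eq_mul_div]
    ring
  have hLtop : L ≠ ⊤ := ne_top_of_le_ne_top ENNReal.ofReal_ne_top (hLb (fun _ => 1) fun _ => one_pos)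
  have hLr : L.toReal ≤ 2 * π * S := by
    by_contra hlt
    push Not at hlt
    have hLpos : 0 < L.toReal := lt_trans (by positivity) hlt
    have : S ≤ 2 * π * S ^ 2 / L.toReal := by
      refine csSup_le hAne ?_
      rintro _ ⟨σ, hσ, rfl⟩
      have hi := hIpos σ hσ
      have h1 : L.toReal ≤ 2 * π * (S ^ 2 / I σ) :=
        ENNReal.toReal_le_of_le_ofReal (by positivity) (hLb σ hσ)
      rw [le_div_iff₀ hLpos]
      calc I σ * L.toReal ≤ I σ * (2 * π * (S ^ 2 / I σ)) := by gcongr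
        _ = _ := by field_simp
    rw [le_div_iff₀ hLpos] at this
    have h3 : S * (2 * π * S) < S * L.toReal := by gcongr
    nlinarith
  rw [← ENNReal.ofReal_toReal hLtop]
  exact ENNReal.ofReal_le_ofReal (hLr.trans (by gcongr))

end LiebAux
namespace LiebAux
open Filter Topology Set

/-! ### The normalized measure -/

lemma kappa_eq : (2 * π) ^ (-(1 : ℝ) / 2) = (√(2 * π))⁻¹ := by
  rw [Real.sqrt_eq_rpow, ← Real.rpow_neg (by positivity)]
  congr 1; ring

lemma sqrt_two_pi_pos : 0 < √(2 * π) := Real.sqrt_pos.2 (by positivity)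

lemma lintegral_N (f : ℝ → ENNReal) : ∫⁻ x, f x ∂normalizedLebesgueR
    = ENNReal.ofReal (√(2 * π))⁻¹ * ∫⁻ x, f x := by
  unfold normalizedLebesgueR
  rw [lintegral_smul_measure, kappa_eq, smul_eq_mul]

lemma integral_N (f : ℝ → ℝ) : ∫ x, f x ∂normalizedLebesgueR
    = (√(2 * π))⁻¹ * ∫ x, f x := by
  unfold normalizedLebesgueR
  rw [integral_smul_measure, kappa_eq, smul_eq_mul,
    ENNReal.toReal_ofReal (inv_nonneg.2 sqrt_two_pi_pos.le)]

lemma integrable_of_N (F : ℝ → ℝ) (hm : Measurable F) (h0 : ∀ x, 0 ≤ F x)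
    (h1 : ∫⁻ x, ENNReal.ofReal (F x) ∂normalizedLebesgueR = 1) :
    Integrable F ∧ ∫ x, F x = √(2 * π) := by
  rw [lintegral_N] at h1
  have hs := sqrt_two_pi_pos
  have h2 : ∫⁻ x, ENNReal.ofReal (F x) = ENNReal.ofReal √(2 * π) := by
    calc ∫⁻ x, ENNReal.ofReal (F x)
        = ENNReal.ofReal √(2 * π) * (ENNReal.ofReal (√(2 * π))⁻¹ * ∫⁻ x, ENNReal.ofReal (F x)) := by
          rw [← mul_assoc, ← ENNReal.ofReal_mul hs.le, mul_inv_cancel₀ hs.ne', ENNReal.ofReal_one,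
            one_mul]
      _ = _ := by rw [h1, mul_one]
  constructor
  · refine ⟨hm.aestronglyMeasurable, ?_⟩
    rw [hasFiniteIntegral_iff_ofReal (Eventually.of_forall h0), h2]
    exact ENNReal.ofReal_lt_top
  · rw [integral_eq_lintegral_of_nonneg_ae (Eventually.of_forall h0) hm.aestronglyMeasurable, h2,
      ENNReal.toReal_ofReal hs.le]

/-- Normalized Gaussian in `L^{1/c}`. -/
noncomputable def gs (α c : ℝ) (x : ℝ) : ℝ := α ^ (c / 2) * rexp (-(c * α) * x ^ 2 / 2)

lemma gs_pos {α c : ℝ} (hα : 0 < α) (x : ℝ) : 0 < gs α c x :=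
  mul_pos (Real.rpow_pos_of_pos hα _) (Real.exp_pos _)

lemma gs_rpow {α c : ℝ} (hα : 0 < α) (hc : 0 < c) (x : ℝ) :
    gs α c x ^ (1 / c) = √α * rexp (-(α * x ^ 2 + 2 * 0 * x + 0) / 2) := by
  unfold gs
  rw [Real.mul_rpow (Real.rpow_nonneg hα.le _) (Real.exp_pos _).le, ← Real.rpow_mul hα.le,
    ← Real.exp_mul, Real.sqrt_eq_rpow]
  congr 2
  · field_simp
  · field_simp
    ring

lemma gs_norm {α c : ℝ} (hα : 0 < α) (hc : 0 < c) :
    ∫⁻ x, ENNReal.ofReal (gs α c x) ^ (1 / c) ∂normalizedLebesgueR = 1 := by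
  have hs := sqrt_two_pi_pos
  have hα' := Real.sqrt_pos.2 hα
  have e : ∀ x, ENNReal.ofReal (gs α c x) ^ (1 / c)
      = ENNReal.ofReal √α * ENNReal.ofReal (rexp (-(α * x ^ 2 + 2 * 0 * x + 0) / 2)) := by
    intro x
    rw [ENNReal.ofReal_rpow_of_pos (gs_pos hα x), gs_rpow hα hc, ENNReal.ofReal_mul hα'.le]
  simp only [e]
  rw [lintegral_N, lintegral_const_mul _ (by fun_prop), lintegral_quad _ _ _ hα,
    ← ENNReal.ofReal_mul hα'.le, ← ENNReal.ofReal_mul (by positivity)]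
  rw [← ENNReal.ofReal_one]
  congr 1
  simp only [ne_eq, OfNat.ofNat_ne_zero, not_false_eq_true, zero_pow, zero_div, sub_zero,
    neg_zero, Real.exp_zero, mul_one]
  rw [Real.sqrt_div (by positivity)]
  field_simp

lemma eLpNorm_eq (p : ℝ) (hp : 0 < p) (f : ℝ → ℝ) (μ : Measure ℝ) :
    eLpNorm f (ENNReal.ofReal p) μ = (∫⁻ x, ‖f x‖ₑ ^ p ∂μ) ^ (1 / p) := by
  rw [eLpNorm_eq_lintegral_rpow_enorm_toReal (by simpa using hp) ENNReal.ofReal_ne_top,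
    ENNReal.toReal_ofReal hp.le]

lemma eLpNorm_gs {α p : ℝ} (hα : 0 < α) (hp : 0 < p) :
    eLpNorm (gs α (1 / p)) (ENNReal.ofReal p) normalizedLebesgueR = 1 := by
  rw [eLpNorm_eq p hp]
  have := gs_norm hα (show 0 < 1 / p by positivity)
  rw [one_div_one_div] at this
  simp only [Real.enorm_of_nonneg (gs_pos hα _).le, this, ENNReal.one_rpow]

/-! ### Duality -/

lemma dual (μ : Measure ℝ) [IsFiniteMeasureOnCompacts μ] (u : ℝ → ENNReal) (hu : Measurable u)
    (r : ℝ) (hr : 1 < r) (C : ENNReal)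
    (H : ∀ F : ℝ → ℝ, Measurable F → (∀ x, 0 ≤ F x) → ∫⁻ x, ENNReal.ofReal (F x) ∂μ = 1 →
      ∫⁻ x, u x * ENNReal.ofReal (F x ^ (1 - 1 / r)) ∂μ ≤ C) :
    (∫⁻ x, u x ^ r ∂μ) ^ (1 / r) ≤ C := by
  have hr0 : 0 < r := by linarith
  set W : ℕ → ℝ → ENNReal := fun n => (Icc (-(n:ℝ)) n).indicator (fun x => min (u x) n) with hW
  have hWm : ∀ n, Measurable (W n) := fun n =>
    (hu.min measurable_const).indicator measurableSet_Icc
  have hWle : ∀ n x, W n x ≤ u x := fun n x => by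
    simp only [hW]
    by_cases hx : x ∈ Icc (-(n:ℝ)) n
    · rw [indicator_of_mem hx]; exact min_le_left _ _
    · rw [indicator_of_notMem hx]; exact zero_le
  have hWn : ∀ n x, W n x ≤ (Icc (-(n:ℝ)) n).indicator (fun _ => (n : ENNReal)) x := fun n x =>
    indicator_le_indicator (min_le_right _ _)
  have hWtop : ∀ n x, W n x ≠ ⊤ := fun n x => by
    refine ne_top_of_le_ne_top (ENNReal.natCast_ne_top n) ((hWn n x).trans ?_)
    exact indicator_le_self' (fun _ _ => zero_le) x
  have hlim : ∀ x, Tendsto (fun n => W n x) atTop (𝓝 (u x)) := by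
    intro x
    have h1 : Tendsto (fun n : ℕ => min (u x) (n : ENNReal)) atTop (𝓝 (min (u x) ⊤)) :=
      tendsto_const_nhds.min ENNReal.tendsto_nat_nhds_top
    rw [min_eq_left le_top] at h1
    refine h1.congr' ?_
    obtain ⟨N, hN⟩ := exists_nat_ge |x|
    filter_upwards [eventually_ge_atTop N] with n hn
    have : |x| ≤ n := hN.trans (by exact_mod_cast hn)
    simp only [hW]
    rw [indicator_of_mem (by rw [mem_Icc]; exact abs_le.1 this)]
  set A : ℕ → ENNReal := fun n => ∫⁻ x, W n x ^ r ∂μ with hA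
  have hAtop : ∀ n, A n ≠ ⊤ := by
    intro n
    have : A n ≤ ∫⁻ x, (Icc (-(n:ℝ)) n).indicator (fun _ => (n : ENNReal) ^ r) x ∂μ := by
      refine lintegral_mono fun x => ?_
      refine (ENNReal.rpow_le_rpow (hWn n x) hr0.le).trans ?_
      by_cases hx : x ∈ Icc (-(n:ℝ)) n
      · rw [indicator_of_mem hx, indicator_of_mem hx]
      · rw [indicator_of_notMem hx, indicator_of_notMem hx, ENNReal.zero_rpow_of_pos hr0]
    refine ne_top_of_le_ne_top ?_ this
    rw [lintegral_indicator measurableSet_Icc, setLIntegral_const]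
    exact ENNReal.mul_ne_top (ENNReal.rpow_ne_top_of_nonneg hr0.le (ENNReal.natCast_ne_top n))
      isCompact_Icc.measure_lt_top.ne
  have hAC : ∀ n, A n ≤ C ^ r := by
    intro n
    by_cases hA0 : A n = 0
    · rw [hA0]; exact zero_le
    have hAr : 0 < (A n).toReal := ENNReal.toReal_pos hA0 (hAtop n)
    set F : ℝ → ℝ := fun x => (W n x).toReal ^ r / (A n).toReal with hF
    have hFm : Measurable F := ((hWm n).ennreal_toReal.pow_const r).div_const _
    have hFe : ∀ x, ENNReal.ofReal (F x) = W n x ^ r * (A n)⁻¹ := by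
      intro x
      simp only [hF]
      rw [ENNReal.ofReal_div_of_pos hAr, ENNReal.ofReal_toReal (hAtop n),
        ← ENNReal.ofReal_rpow_of_nonneg ENNReal.toReal_nonneg hr0.le,
        ENNReal.ofReal_toReal (hWtop n x), div_eq_mul_inv]
    have h1 := H F hFm (fun x => by simp only [hF]; positivity) (by
      simp only [hFe]
      rw [lintegral_mul_const _ ((hWm n).pow_const r)]
      exact ENNReal.mul_inv_cancel hA0 (hAtop n))
    have hc3 : 0 < 1 - 1 / r := by
      rw [sub_pos, div_lt_one hr0]; exact hr
    have hFc : ∀ x, ENNReal.ofReal (F x ^ (1 - 1 / r))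
        = W n x ^ (r - 1) * (A n)⁻¹ ^ (1 - 1 / r) := by
      intro x
      rw [← ENNReal.ofReal_rpow_of_nonneg (by simp only [hF]; positivity) hc3.le, hFe,
        ENNReal.mul_rpow_of_nonneg _ _ hc3.le, ← ENNReal.rpow_mul]
      congr 2
      field_simp
    have h2 : A n * (A n)⁻¹ ^ (1 - 1 / r) ≤ C := by
      refine le_trans ?_ h1
      rw [hA]
      simp only []
      rw [← lintegral_mul_const _ ((hWm n).pow_const r)]
      refine lintegral_mono fun x => ?_
      simp only [hFc]
      rw [← mul_assoc]
      refine mul_le_mul_left ?_ _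
      have : W n x ^ r = W n x * W n x ^ (r - 1) := by
        conv_rhs => rw [← ENNReal.rpow_one (W n x), ← ENNReal.rpow_mul, one_mul,
          ← ENNReal.rpow_add_of_nonneg _ _ zero_le_one (by linarith)]
        congr 1; ring
      rw [this]
      exact mul_le_mul_left (hWle n x) _
    have h3 : A n * (A n)⁻¹ ^ (1 - 1 / r) = A n ^ (1 / r) := by
      rw [ENNReal.inv_rpow, ← ENNReal.rpow_neg]
      conv_lhs => rw [← ENNReal.rpow_one (A n), ← ENNReal.rpow_mul, one_mul,
        ← ENNReal.rpow_add _ _ hA0 (hAtop n)]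
      congr 1; ring
    rw [h3] at h2
    have := ENNReal.rpow_le_rpow h2 hr0.le
    rwa [← ENNReal.rpow_mul, one_div_mul_cancel hr0.ne', ENNReal.rpow_one] at this
  have hfin : ∫⁻ x, u x ^ r ∂μ ≤ C ^ r := by
    calc ∫⁻ x, u x ^ r ∂μ = ∫⁻ x, liminf (fun n => W n x ^ r) atTop ∂μ := by
          refine lintegral_congr fun x => ?_
          exact (Tendsto.liminf_eq ((ENNReal.continuous_rpow_const.tendsto _).comp (hlim x))).symm
      _ ≤ liminf (fun n => ∫⁻ x, W n x ^ r ∂μ) atTop :=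
          lintegral_liminf_le fun n => (hWm n).pow_const r
      _ ≤ C ^ r := liminf_le_of_frequently_le' (Frequently.of_forall hAC)
  have := ENNReal.rpow_le_rpow hfin (show 0 ≤ 1 / r by positivity)
  rwa [← ENNReal.rpow_mul, mul_one_div_cancel hr0.ne', ENNReal.rpow_one] at this

end LiebAux
namespace LiebAux
open Filter Topology Set

/-! ### Coordinates -/

lemma lin_coord (B : (Fin 2 → ℝ) →ₗ[ℝ] ℝ) (x y : ℝ) :
    B ![x, y] = B ![1, 0] * x + B ![0, 1] * y := by
  have : (![x, y] : Fin 2 → ℝ) = x • ![1, 0] + y • ![0, 1] := by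
    ext i; fin_cases i <;> simp
  rw [this, map_add, map_smul, map_smul]
  simp only [smul_eq_mul]; ring

lemma quad_coord (J : Matrix (Fin 2) (Fin 2) ℝ) (x y : ℝ) :
    -(![x, y] ⬝ᵥ J.mulVec ![x, y])
      = -(2 * J 0 0 * x ^ 2 + 2 * (J 0 1 + J 1 0) * x * y + 2 * J 1 1 * y ^ 2) / 2 := by
  simp [dotProduct, mulVec, Fin.sum_univ_two]
  ring

lemma quad_nonneg (J : Matrix (Fin 2) (Fin 2) ℝ) (hJ : J.PosSemidef) (x y : ℝ) :
    0 ≤ 2 * J 0 0 * x ^ 2 + 2 * (J 0 1 + J 1 0) * x * y + 2 * J 1 1 * y ^ 2 := by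
  have h1 := hJ.dotProduct_mulVec_nonneg ![x, y]
  have h2 := quad_coord J x y
  rw [star_trivial] at h1
  linarith

lemma pd_of_nondeg {j1 j2 j3 c1 c2 c3 a1 a2 b1 b2 : ℝ}
    (hJ : ∀ x y, 0 ≤ j1 * x ^ 2 + 2 * j2 * x * y + j3 * y ^ 2)
    (h1 : 0 < c1) (h2 : 0 < c2) (h3 : 0 < c3) (hnd : ¬ (b1 = 0 ∧ b2 = 0 ∧ j3 = 0)) :
    PD j1 j2 j3 ![c1, c2, c3] ![a1, a2, 1] ![b1, b2, 0] := by
  intro τ hτ x y hxy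
  simp only [Fin.sum_univ_three, Matrix.cons_val_zero, Matrix.cons_val_one, Matrix.cons_val]
  have t0 := hτ 0
  have t1 := hτ 1
  have t2 := hτ 2
  have hj := hJ x y
  by_cases hx : x = 0
  · subst hx
    have hy : y ≠ 0 := by simpa using hxy
    have hy2 : 0 < y ^ 2 := by positivity
    have hj3 : 0 ≤ j3 := by simpa using hJ 0 1
    have : 0 < j3 + c1 * τ 0 * b1 ^ 2 + c2 * τ 1 * b2 ^ 2 := by
      by_cases hb1 : b1 = 0
      · by_cases hb2 : b2 = 0
        · have : j3 ≠ 0 := fun h => hnd ⟨hb1, hb2, h⟩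
          have : 0 < j3 := lt_of_le_of_ne hj3 this.symm
          positivity
        · have : 0 < c2 * τ 1 * b2 ^ 2 := by positivity
          positivity
      · have : 0 < c1 * τ 0 * b1 ^ 2 := by positivity
        positivity
    have := mul_pos this hy2
    calc 0 < _ := this
      _ = _ := by ring
  · have : 0 < c3 * τ 2 * (1 * x + 0 * y) ^ 2 := by
      simp only [one_mul, zero_mul, add_zero]; positivity
    positivity

lemma gaussConv_gs (p q : ℝ) (B₁ B₂ : (Fin 2 → ℝ) →ₗ[ℝ] ℝ)
    (J : Matrix (Fin 2) (Fin 2) ℝ) (c3 : ℝ) (τ : Fin 3 → ℝ) (hτ : ∀ i, 0 < τ i)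
    (h : PD (2 * J 0 0) (J 0 1 + J 1 0) (2 * J 1 1) ![1 / p, 1 / q, c3]
      ![B₁ ![1, 0], B₂ ![1, 0], 1] ![B₁ ![0, 1], B₂ ![0, 1], 0]) (x : ℝ) :
    gaussConv B₁ B₂ J (gs (τ 0) (1 / p)) (gs (τ 1) (1 / q)) x * gs (τ 2) c3 x
      = (∏ i, τ i ^ ((![1 / p, 1 / q, c3] : Fin 3 → ℝ) i / 2)) *
        (√(mEntry (2 * J 1 1) ![1 / p, 1 / q, c3] ![B₁ ![0, 1], B₂ ![0, 1], 0]
          ![B₁ ![0, 1], B₂ ![0, 1], 0] τ))⁻¹ *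
        rexp (-((mDet (2 * J 0 0) (J 0 1 + J 1 0) (2 * J 1 1) ![1 / p, 1 / q, c3]
      ![B₁ ![1, 0], B₂ ![1, 0], 1] ![B₁ ![0, 1], B₂ ![0, 1], 0] τ /
        mEntry (2 * J 1 1) ![1 / p, 1 / q, c3] ![B₁ ![0, 1], B₂ ![0, 1], 0]
          ![B₁ ![0, 1], B₂ ![0, 1], 0] τ) * x ^ 2 + 2 * 0 * x + 0) / 2) := by
  have hm3 := h.m3 hτ
  set a1 := B₁ ![1, 0] with ha1
  set a2 := B₂ ![1, 0] with ha2
  set b1 := B₁ ![0, 1] with hb1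
  set b2 := B₂ ![0, 1] with hb2
  set m3 := mEntry (2 * J 1 1) ![1 / p, 1 / q, c3] ![b1, b2, 0] ![b1, b2, 0] τ with hm3d
  set m2 := mEntry (J 0 1 + J 1 0) ![1 / p, 1 / q, c3] ![a1, a2, 1] ![b1, b2, 0] τ with hm2d
  set m1 := mEntry (2 * J 0 0) ![1 / p, 1 / q, c3] ![a1, a2, 1] ![a1, a2, 1] τ with hm1d
  have hdet : mDet (2 * J 0 0) (J 0 1 + J 1 0) (2 * J 1 1) ![1 / p, 1 / q, c3]
      ![a1, a2, 1] ![b1, b2, 0] τ = m1 * m3 - m2 ^ 2 := rfl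
  rw [hdet]
  have e1 : m1 = 2 * J 0 0 + 1 / p * τ 0 * a1 * a1 + 1 / q * τ 1 * a2 * a2 + c3 * τ 2 := by
    simp only [hm1d, mEntry, Fin.sum_univ_three, Matrix.cons_val_zero, Matrix.cons_val_one,
      Matrix.cons_val]
    ring
  have e2 : m2 = J 0 1 + J 1 0 + 1 / p * τ 0 * a1 * b1 + 1 / q * τ 1 * a2 * b2 := by
    simp only [hm2d, mEntry, Fin.sum_univ_three, Matrix.cons_val_zero, Matrix.cons_val_one,
      Matrix.cons_val]
    ring
  have e3 : m3 = 2 * J 1 1 + 1 / p * τ 0 * b1 * b1 + 1 / q * τ 1 * b2 * b2 := by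
    simp only [hm3d, mEntry, Fin.sum_univ_three, Matrix.cons_val_zero, Matrix.cons_val_one,
      Matrix.cons_val]
    ring
  have hinteg : ∀ y, gs (τ 0) (1 / p) (B₁ ![x, y]) * gs (τ 1) (1 / q) (B₂ ![x, y])
      * Real.exp (-(![x, y] ⬝ᵥ J.mulVec ![x, y]))
      = (τ 0 ^ (1 / p / 2) * τ 1 ^ (1 / q / 2)) *
        rexp (-(m3 * y ^ 2 + 2 * (m2 * x) * y + (m1 - c3 * τ 2) * x ^ 2) / 2) := by
    intro y
    rw [quad_coord, lin_coord B₁, lin_coord B₂, ← ha1, ← ha2, ← hb1, ← hb2]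
    unfold gs
    rw [mul_mul_mul_comm, mul_assoc, ← Real.exp_add, ← Real.exp_add, e1, e2, e3]
    congr 2
    ring
  unfold gaussConv
  simp only [hinteg]
  rw [integral_N, integral_const_mul, (integral_quad _ _ _ hm3).2]
  have hs := sqrt_two_pi_pos
  have hs3 := Real.sqrt_pos.2 hm3
  unfold gs
  rw [Fin.prod_univ_three]
  simp only [Matrix.cons_val_zero, Matrix.cons_val_one, Matrix.cons_val]
  have e4 : rexp (-(((m1 * m3 - m2 ^ 2) / m3) * x ^ 2 + 2 * 0 * x + 0) / 2)
      = rexp (-((m1 - c3 * τ 2) * x ^ 2 - (m2 * x) ^ 2 / m3) / 2)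
        * rexp (-(c3 * τ 2) * x ^ 2 / 2) := by
    rw [← Real.exp_add]
    congr 1
    field_simp
    ring
  rw [e4, Real.sqrt_div (by positivity)]
  field_simp

lemma gauss_lower (p q r : ℝ) (hr : 1 < r)
    (B₁ B₂ : (Fin 2 → ℝ) →ₗ[ℝ] ℝ) (J : Matrix (Fin 2) (Fin 2) ℝ)
    (h : PD (2 * J 0 0) (J 0 1 + J 1 0) (2 * J 1 1) ![1 / p, 1 / q, 1 - 1 / r]
      ![B₁ ![1, 0], B₂ ![1, 0], 1] ![B₁ ![0, 1], B₂ ![0, 1], 0])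
    (τ : Fin 3 → ℝ) (hτ : ∀ i, 0 < τ i) :
    ENNReal.ofReal ((∏ i, τ i ^ ((![1 / p, 1 / q, 1 - 1 / r] : Fin 3 → ℝ) i / 2)) /
      √(mDet (2 * J 0 0) (J 0 1 + J 1 0) (2 * J 1 1) ![1 / p, 1 / q, 1 - 1 / r]
      ![B₁ ![1, 0], B₂ ![1, 0], 1] ![B₁ ![0, 1], B₂ ![0, 1], 0] τ))
    ≤ eLpNorm (gaussConv B₁ B₂ J (gs (τ 0) (1 / p)) (gs (τ 1) (1 / q)))
      (ENNReal.ofReal r) normalizedLebesgueR := by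
  have hr0 : 0 < r := by linarith
  have hc3 : 0 < 1 - 1 / r := by
    rw [sub_pos, div_lt_one hr0]; exact hr
  have hconj : r.HolderConjugate (1 / (1 - 1 / r)) := by
    rw [Real.holderConjugate_iff]
    refine ⟨hr, ?_⟩
    rw [one_div, inv_inv, one_div]; ring
  set U := gaussConv B₁ B₂ J (gs (τ 0) (1 / p)) (gs (τ 1) (1 / q)) with hU
  have hm3 := h.m3 hτ
  have hdet := h.det hτ
  have hform := gaussConv_gs p q B₁ B₂ J (1 - 1 / r) τ hτ h
  rw [← hU] at hform
  set m3 := mEntry (2 * J 1 1) ![1 / p, 1 / q, 1 - 1 / r] ![B₁ ![0, 1], B₂ ![0, 1], 0]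
          ![B₁ ![0, 1], B₂ ![0, 1], 0] τ with hm3d
  set d := mDet (2 * J 0 0) (J 0 1 + J 1 0) (2 * J 1 1) ![1 / p, 1 / q, 1 - 1 / r]
      ![B₁ ![1, 0], B₂ ![1, 0], 1] ![B₁ ![0, 1], B₂ ![0, 1], 0] τ with hdd
  set P := ∏ i, τ i ^ ((![1 / p, 1 / q, 1 - 1 / r] : Fin 3 → ℝ) i / 2) with hP
  have hPpos : 0 < P := Finset.prod_pos fun i _ => Real.rpow_pos_of_pos (hτ i) _
  have hs := sqrt_two_pi_pos
  have hs3 := Real.sqrt_pos.2 hm3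
  have hsd := Real.sqrt_pos.2 hdet
  have hgm : Measurable (gs (τ 2) (1 - 1 / r)) := by unfold gs; fun_prop
  have hUm : Measurable U := by
    have : U = fun x => (P * (√m3)⁻¹ * rexp (-((d / m3) * x ^ 2 + 2 * 0 * x + 0) / 2))
        / gs (τ 2) (1 - 1 / r) x := by
      funext x
      rw [← hform x, mul_div_cancel_right₀ _ (gs_pos (hτ 2) x).ne']
    rw [this]
    refine Measurable.div (by fun_prop) hgm
  have hH := ENNReal.lintegral_mul_le_Lp_mul_Lq normalizedLebesgueR hconj
    (f := fun x => ‖U x‖ₑ) (g := fun x => ENNReal.ofReal (gs (τ 2) (1 - 1 / r) x))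
    hUm.enorm.aemeasurable hgm.ennreal_ofReal.aemeasurable
  rw [gs_norm (hτ 2) hc3, ENNReal.one_rpow, mul_one, ← eLpNorm_eq r hr0] at hH
  refine le_trans (le_of_eq ?_) hH
  have e : ∀ x, ((fun x => ‖U x‖ₑ) * fun x => ENNReal.ofReal (gs (τ 2) (1 - 1 / r) x)) x
      = ENNReal.ofReal (P * (√m3)⁻¹) *
        ENNReal.ofReal (rexp (-((d / m3) * x ^ 2 + 2 * 0 * x + 0) / 2)) := by
    intro x
    rw [Pi.mul_apply, ← Real.enorm_of_nonneg (gs_pos (hτ 2) x).le, ← enorm_mul, hform x,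
      Real.enorm_of_nonneg (by positivity), ENNReal.ofReal_mul (by positivity)]
  simp only [e]
  rw [lintegral_N, lintegral_const_mul _ (by fun_prop), lintegral_quad _ _ _ (by positivity),
    ← ENNReal.ofReal_mul (by positivity), ← ENNReal.ofReal_mul (by positivity)]
  congr 1
  simp only [ne_eq, OfNat.ofNat_ne_zero, not_false_eq_true, zero_pow, zero_div, sub_zero,
    neg_zero, Real.exp_zero, mul_one]
  rw [Real.sqrt_div (by positivity), Real.sqrt_div hdet.le]
  field_simp

lemma upper (p q r : ℝ) (hp : 1 ≤ p) (hq : 1 ≤ q) (hr : 1 < r)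
    (B₁ B₂ : (Fin 2 → ℝ) →ₗ[ℝ] ℝ) (J : Matrix (Fin 2) (Fin 2) ℝ) (hJ : J.PosSemidef)
    (h : PD (2 * J 0 0) (J 0 1 + J 1 0) (2 * J 1 1) ![1 / p, 1 / q, 1 - 1 / r]
      ![B₁ ![1, 0], B₂ ![1, 0], 1] ![B₁ ![0, 1], B₂ ![0, 1], 0])
    (hB₁ : B₁ ![1, 0] ≠ 0 ∨ B₁ ![0, 1] ≠ 0) (hB₂ : B₂ ![1, 0] ≠ 0 ∨ B₂ ![0, 1] ≠ 0)
    (C : ℝ) (hC : ∀ τ : Fin 3 → ℝ, (∀ i, 0 < τ i) →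
      (∏ i, τ i ^ ((![1 / p, 1 / q, 1 - 1 / r] : Fin 3 → ℝ) i / 2)) /
      √(mDet (2 * J 0 0) (J 0 1 + J 1 0) (2 * J 1 1) ![1 / p, 1 / q, 1 - 1 / r]
      ![B₁ ![1, 0], B₂ ![1, 0], 1] ![B₁ ![0, 1], B₂ ![0, 1], 0] τ) ≤ C)
    (f g : ℝ → ℝ) (hf : Measurable f) (hg : Measurable g) (hf0 : ∀ x, 0 ≤ f x)
    (hg0 : ∀ x, 0 ≤ g x) (hf1 : eLpNorm f (ENNReal.ofReal p) normalizedLebesgueR = 1)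
    (hg1 : eLpNorm g (ENNReal.ofReal q) normalizedLebesgueR = 1) :
    eLpNorm (gaussConv B₁ B₂ J f g) (ENNReal.ofReal r) normalizedLebesgueR
      ≤ ENNReal.ofReal C := by
  have hr0 : 0 < r := by linarith
  have hs := sqrt_two_pi_pos
  have hc3 : 0 < 1 - 1 / r := by
    rw [sub_pos, div_lt_one hr0]; exact hr
  have hpow : ∀ (p : ℝ), 1 ≤ p → ∀ f : ℝ → ℝ, Measurable f → (∀ x, 0 ≤ f x) →
      eLpNorm f (ENNReal.ofReal p) normalizedLebesgueR = 1 →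
      Integrable (fun x => f x ^ p) ∧ ∫ x, f x ^ p = √(2 * π) := by
    intro p hp f hf hf0 hf1
    have hp0 : 0 < p := by linarith
    refine integrable_of_N _ (hf.pow_const p) (fun x => Real.rpow_nonneg (hf0 x) _) ?_
    rw [eLpNorm_eq p hp0] at hf1
    have hf2 := congrArg (fun t : ENNReal => t ^ p) hf1
    simp only [← ENNReal.rpow_mul, one_div_mul_cancel hp0.ne', ENNReal.rpow_one,
      ENNReal.one_rpow] at hf2
    rw [← hf2]
    refine lintegral_congr fun x => ?_
    rw [Real.enorm_of_nonneg (hf0 x), ENNReal.ofReal_rpow_of_nonneg (hf0 x) hp0.le]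
  set k : ℝ × ℝ → ℝ := fun z => rexp (-(2 * J 0 0 * z.1 ^ 2 + 2 * (J 0 1 + J 1 0) * z.1 * z.2
    + 2 * J 1 1 * z.2 ^ 2) / 2) with hk
  have hkm : Measurable k := by simp only [hk]; fun_prop
  have hk0 : ∀ z, 0 ≤ k z := fun z => (Real.exp_pos _).le
  set a1 := B₁ ![1, 0] with ha1
  set a2 := B₂ ![1, 0] with ha2
  set b1 := B₁ ![0, 1] with hb1
  set b2 := B₂ ![0, 1] with hb2
  set Ψ : ℝ × ℝ → ℝ := fun z => f (a1 * z.1 + b1 * z.2) * g (a2 * z.1 + b2 * z.2) * k z with hΨ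
  have hΨm : Measurable Ψ :=
    ((hf.comp (by fun_prop)).mul (hg.comp (by fun_prop))).mul hkm
  have hΨ0 : ∀ z, 0 ≤ Ψ z := fun z => mul_nonneg (mul_nonneg (hf0 _) (hg0 _)) (hk0 z)
  set u : ℝ → ENNReal := fun x => ENNReal.ofReal (√(2 * π))⁻¹ * ∫⁻ y, ENNReal.ofReal (Ψ (x, y))
    with hu
  have hum : Measurable u :=
    (Measurable.lintegral_prod_right' (f := fun z => ENNReal.ofReal (Ψ z))
      hΨm.ennreal_ofReal).const_mul _
  have hle : ∀ x, ‖gaussConv B₁ B₂ J f g x‖ₑ ≤ u x := by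
    intro x
    refine (enorm_integral_le_lintegral_enorm _).trans (le_of_eq ?_)
    rw [lintegral_N]
    simp only [hu]
    congr 1
    refine lintegral_congr fun y => ?_
    rw [quad_coord, lin_coord B₁, lin_coord B₂]
    rw [← Real.enorm_of_nonneg (hΨ0 (x, y))]
  rw [eLpNorm_eq r hr0]
  refine (ENNReal.rpow_le_rpow (lintegral_mono fun x => ENNReal.rpow_le_rpow (hle x) hr0.le)
    (by positivity)).trans ?_
  have : IsFiniteMeasureOnCompacts normalizedLebesgueR := by
    refine ⟨fun K hK => ?_⟩
    unfold normalizedLebesgueR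
    rw [Measure.smul_apply, smul_eq_mul]
    exact ENNReal.mul_lt_top ENNReal.ofReal_lt_top hK.measure_lt_top
  refine dual normalizedLebesgueR u hum r hr (ENNReal.ofReal C) ?_
  intro F hFm hF0 hF1
  obtain ⟨hFi, hFI⟩ := integrable_of_N F hFm hF0 hF1
  obtain ⟨hfi, hfI⟩ := hpow p hp f hf hf0 hf1
  obtain ⟨hgi, hgI⟩ := hpow q hq g hg hg0 hg1
  have hBL := brascampLieb (ι := Fin 3) (quad_nonneg J hJ) (c := ![1 / p, 1 / q, 1 - 1 / r])
    (a := ![a1, a2, 1]) (b := ![b1, b2, 0])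
    (by intro i; fin_cases i <;> simp <;> first | linarith | skip
        rw [← one_div]; linarith)
    (by intro i; fin_cases i
        · simpa using hB₁
        · simpa using hB₂
        · simp)
    h C hC ![fun x => f x ^ p, fun x => g x ^ q, F]
    (by intro i x; fin_cases i
        · exact Real.rpow_nonneg (hf0 x) _
        · exact Real.rpow_nonneg (hg0 x) _
        · exact hF0 x)
    (by intro i; fin_cases i
        · exact hfi
        · exact hgi
        · exact hFi)
    (by intro i; fin_cases i
        · exact hfI
        · exact hgI
        · exact hFI)
  simp only [Fin.prod_univ_three, Matrix.cons_val_zero, Matrix.cons_val_one, Matrix.cons_val] at hBL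
  have hpp : ∀ (p : ℝ), 1 ≤ p → ∀ t : ℝ, 0 ≤ t → (t ^ p) ^ (1 / p) = t := fun p hp t ht => by
    rw [← Real.rpow_mul ht, mul_one_div_cancel (by linarith), Real.rpow_one]
  have hFc : ∀ x, 0 ≤ F x ^ (1 - 1 / r) := fun x => Real.rpow_nonneg (hF0 x) _
  have hFcm : Measurable fun x => F x ^ (1 - 1 / r) := hFm.pow_const _
  calc ∫⁻ x, u x * ENNReal.ofReal (F x ^ (1 - 1 / r)) ∂normalizedLebesgueR
      = ENNReal.ofReal (√(2 * π))⁻¹ * (ENNReal.ofReal (√(2 * π))⁻¹ *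
          ∫⁻ x, ∫⁻ y, ENNReal.ofReal (Ψ (x, y) * F x ^ (1 - 1 / r))) := by
        rw [lintegral_N]
        congr 1
        rw [← lintegral_const_mul' _ _ ENNReal.ofReal_ne_top]
        refine lintegral_congr fun x => ?_
        simp only [hu]
        rw [mul_assoc]
        congr 1
        rw [← lintegral_mul_const' _ _ ENNReal.ofReal_ne_top]
        refine lintegral_congr fun y => ?_
        rw [ENNReal.ofReal_mul (hΨ0 _)]
    _ = ENNReal.ofReal (√(2 * π))⁻¹ * (ENNReal.ofReal (√(2 * π))⁻¹ *
          ∫⁻ z : ℝ × ℝ, ENNReal.ofReal (Ψ z * F z.1 ^ (1 - 1 / r))) := by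
        rw [Measure.volume_eq_prod, lintegral_prod]
        exact ((hΨm.mul (hFcm.comp measurable_fst)).ennreal_ofReal).aemeasurable
    _ ≤ ENNReal.ofReal (√(2 * π))⁻¹ * (ENNReal.ofReal (√(2 * π))⁻¹ *
          ENNReal.ofReal (2 * π * C)) := by
        gcongr
        refine le_trans (le_of_eq ?_) hBL
        refine lintegral_congr fun z => ?_
        congr 1
        rw [hpp p hp _ (hf0 _), hpp q hq _ (hg0 _)]
        simp only [hΨ, hk, one_mul, zero_mul, add_zero]
        ring
    _ = ENNReal.ofReal C := by
        rw [← ENNReal.ofReal_mul (by positivity), ← ENNReal.ofReal_mul (by positivity)]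
        congr 1
        have : √(2 * π) * √(2 * π) = 2 * π := Real.mul_self_sqrt (by positivity)
        rw [← mul_assoc, ← mul_inv, this, ← mul_assoc, inv_mul_cancel₀ (by positivity), one_mul]

end LiebAux
namespace LiebAux
open Filter Topology Set

lemma unbounded_rpow (e K : ℝ) (he : 0 < e) : ∃ t : ℝ, 0 < t ∧ K < t ^ e := by
  obtain ⟨t, h1, h2⟩ := ((tendsto_rpow_atTop he).eventually_gt_atTop K |>.and
    (eventually_gt_atTop 0)).exists
  exact ⟨t, h2, h1⟩

lemma gaussConv_degenerate (B₁ B₂ : (Fin 2 → ℝ) →ₗ[ℝ] ℝ)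
    (J : Matrix (Fin 2) (Fin 2) ℝ) (hJ : J.PosSemidef) (h1 : B₁ ![0, 1] = 0) (h2 : B₂ ![0, 1] = 0)
    (h3 : 2 * J 1 1 = 0) (f g : ℝ → ℝ) : gaussConv B₁ B₂ J f g = 0 := by
  have hj : J 0 1 + J 1 0 = 0 := by
    by_contra hne
    have := quad_nonneg J hJ 1 (-(2 * J 0 0 + 1) / (2 * (J 0 1 + J 1 0)))
    rw [h3] at this
    have e : 2 * (J 0 1 + J 1 0) * 1 * (-(2 * J 0 0 + 1) / (2 * (J 0 1 + J 1 0)))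
        = -(2 * J 0 0 + 1) := by field_simp
    rw [e] at this
    linarith
  funext x
  unfold gaussConv
  have e : ∀ y, f (B₁ ![x, y]) * g (B₂ ![x, y]) * Real.exp (-(![x, y] ⬝ᵥ J.mulVec ![x, y]))
      = f (B₁ ![1, 0] * x) * g (B₂ ![1, 0] * x) * rexp (-(2 * J 0 0 * x ^ 2) / 2) := by
    intro y
    rw [quad_coord, lin_coord B₁, lin_coord B₂, h1, h2, h3, hj]
    simp
  simp only [e]
  rw [integral_N, integral_const]
  simp [Measure.real]

end LiebAux

theorem lieb_corollary_gaussian_maximizers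
    (p q r : ℝ) (hp : 1 ≤ p) (hq : 1 ≤ q) (hr : 1 < r)
    (B₁ B₂ : (Fin 2 → ℝ) →ₗ[ℝ] ℝ)
    (J : Matrix (Fin 2) (Fin 2) ℝ) (hJ : J.PosSemidef) :
    sSup {c : ENNReal | ∃ f g : ℝ → ℝ,
        Measurable f ∧ Measurable g ∧ (∀ x, 0 ≤ f x) ∧ (∀ x, 0 ≤ g x) ∧
        eLpNorm f (ENNReal.ofReal p) normalizedLebesgueR = 1 ∧
        eLpNorm g (ENNReal.ofReal q) normalizedLebesgueR = 1 ∧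
        c = eLpNorm (gaussConv B₁ B₂ J f g) (ENNReal.ofReal r) normalizedLebesgueR}
    = sSup {c : ENNReal | ∃ f g : ℝ → ℝ,
        eLpNorm f (ENNReal.ofReal p) normalizedLebesgueR = 1 ∧
        eLpNorm g (ENNReal.ofReal q) normalizedLebesgueR = 1 ∧
        (∃ c₁ s : ℝ, 0 < c₁ ∧ 0 < s ∧ ∀ x, f x = c₁ * Real.exp (-s * x ^ 2 / 2)) ∧
        (∃ c₂ t : ℝ, 0 < c₂ ∧ 0 < t ∧ ∀ x, g x = c₂ * Real.exp (-t * x ^ 2 / 2)) ∧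
        c = eLpNorm (gaussConv B₁ B₂ J f g) (ENNReal.ofReal r) normalizedLebesgueR} := by
  have hp0 : 0 < p := by linarith
  have hq0 : 0 < q := by linarith
  have hr0 : 0 < r := by linarith
  have hc3 : 0 < 1 - 1 / r := by
    rw [sub_pos, div_lt_one hr0]; exact hr
  refine le_antisymm ?_ ?_
  · refine sSup_le ?_
    rintro _ ⟨f, g, hf, hg, hf0, hg0, hf1, hg1, rfl⟩
    by_cases hnd : B₁ ![0, 1] = 0 ∧ B₂ ![0, 1] = 0 ∧ 2 * J 1 1 = 0
    · rw [LiebAux.gaussConv_degenerate B₁ B₂ J hJ hnd.1 hnd.2.1 hnd.2.2]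
      simp
    have hPD := LiebAux.pd_of_nondeg (c1 := 1 / p) (c2 := 1 / q) (c3 := 1 - 1 / r)
      (a1 := B₁ ![1, 0]) (a2 := B₂ ![1, 0]) (LiebAux.quad_nonneg J hJ) (by positivity)
      (by positivity) hc3 hnd
    set R := sSup {c : ENNReal | ∃ f g : ℝ → ℝ,
        eLpNorm f (ENNReal.ofReal p) normalizedLebesgueR = 1 ∧
        eLpNorm g (ENNReal.ofReal q) normalizedLebesgueR = 1 ∧
        (∃ c₁ s : ℝ, 0 < c₁ ∧ 0 < s ∧ ∀ x, f x = c₁ * Real.exp (-s * x ^ 2 / 2)) ∧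
        (∃ c₂ t : ℝ, 0 < c₂ ∧ 0 < t ∧ ∀ x, g x = c₂ * Real.exp (-t * x ^ 2 / 2)) ∧
        c = eLpNorm (gaussConv B₁ B₂ J f g) (ENNReal.ofReal r) normalizedLebesgueR} with hR
    by_cases hRtop : R = ⊤
    · rw [hRtop]; exact le_top
    have hC : ∀ τ : Fin 3 → ℝ, (∀ i, 0 < τ i) →
      (∏ i, τ i ^ ((![1 / p, 1 / q, 1 - 1 / r] : Fin 3 → ℝ) i / 2)) /
      √(LiebAux.mDet (2 * J 0 0) (J 0 1 + J 1 0) (2 * J 1 1) ![1 / p, 1 / q, 1 - 1 / r]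
      ![B₁ ![1, 0], B₂ ![1, 0], 1] ![B₁ ![0, 1], B₂ ![0, 1], 0] τ) ≤ R.toReal := by
      intro τ hτ
      have h1 := LiebAux.gauss_lower p q r hr B₁ B₂ J hPD τ hτ
      have h2 : eLpNorm (gaussConv B₁ B₂ J (LiebAux.gs (τ 0) (1 / p)) (LiebAux.gs (τ 1) (1 / q)))
          (ENNReal.ofReal r) normalizedLebesgueR ≤ R :=
        le_sSup ⟨_, _, LiebAux.eLpNorm_gs (hτ 0) hp0, LiebAux.eLpNorm_gs (hτ 1) hq0,
          ⟨τ 0 ^ (1 / p / 2), 1 / p * τ 0, Real.rpow_pos_of_pos (hτ 0) _,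
            mul_pos (by positivity) (hτ 0), fun x => rfl⟩,
          ⟨τ 1 ^ (1 / q / 2), 1 / q * τ 1, Real.rpow_pos_of_pos (hτ 1) _,
            mul_pos (by positivity) (hτ 1), fun x => rfl⟩, rfl⟩
      exact (ENNReal.ofReal_le_iff_le_toReal hRtop).1 (h1.trans h2)
    have hB₁ : B₁ ![1, 0] ≠ 0 ∨ B₁ ![0, 1] ≠ 0 := by
      by_contra hcon
      push Not at hcon
      obtain ⟨t, ht, hlt⟩ := LiebAux.unbounded_rpow (1 / p / 2)
        (R.toReal * √(LiebAux.mDet (2 * J 0 0) (J 0 1 + J 1 0) (2 * J 1 1)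
          ![1 / p, 1 / q, 1 - 1 / r]
          ![B₁ ![1, 0], B₂ ![1, 0], 1] ![B₁ ![0, 1], B₂ ![0, 1], 0] ![1, 1, 1])) (by positivity)
      have hτ : ∀ i, 0 < (![t, 1, 1] : Fin 3 → ℝ) i := by
        intro i; fin_cases i <;> simp [ht]
      have h1 := hC ![t, 1, 1] hτ
      rw [div_le_iff₀ (Real.sqrt_pos.2 (hPD.det hτ))] at h1
      have h2 : LiebAux.mDet (2 * J 0 0) (J 0 1 + J 1 0) (2 * J 1 1) ![1 / p, 1 / q, 1 - 1 / r]
          ![B₁ ![1, 0], B₂ ![1, 0], 1] ![B₁ ![0, 1], B₂ ![0, 1], 0] ![t, 1, 1]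
          = LiebAux.mDet (2 * J 0 0) (J 0 1 + J 1 0) (2 * J 1 1) ![1 / p, 1 / q, 1 - 1 / r]
          ![B₁ ![1, 0], B₂ ![1, 0], 1] ![B₁ ![0, 1], B₂ ![0, 1], 0] ![1, 1, 1] := by
        rw [hcon.1, hcon.2]
        simp [LiebAux.mDet, LiebAux.mEntry, Fin.sum_univ_three]
      rw [h2] at h1
      simp only [Fin.prod_univ_three, Matrix.cons_val_zero, Matrix.cons_val_one, Matrix.cons_val,
        Real.one_rpow, mul_one] at h1
      exact absurd h1 (not_le.2 hlt)
    have hB₂ : B₂ ![1, 0] ≠ 0 ∨ B₂ ![0, 1] ≠ 0 := by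
      by_contra hcon
      push Not at hcon
      obtain ⟨t, ht, hlt⟩ := LiebAux.unbounded_rpow (1 / q / 2)
        (R.toReal * √(LiebAux.mDet (2 * J 0 0) (J 0 1 + J 1 0) (2 * J 1 1)
          ![1 / p, 1 / q, 1 - 1 / r]
          ![B₁ ![1, 0], B₂ ![1, 0], 1] ![B₁ ![0, 1], B₂ ![0, 1], 0] ![1, 1, 1])) (by positivity)
      have hτ : ∀ i, 0 < (![1, t, 1] : Fin 3 → ℝ) i := by
        intro i; fin_cases i <;> simp [ht]
      have h1 := hC ![1, t, 1] hτ
      rw [div_le_iff₀ (Real.sqrt_pos.2 (hPD.det hτ))] at h1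
      have h2 : LiebAux.mDet (2 * J 0 0) (J 0 1 + J 1 0) (2 * J 1 1) ![1 / p, 1 / q, 1 - 1 / r]
          ![B₁ ![1, 0], B₂ ![1, 0], 1] ![B₁ ![0, 1], B₂ ![0, 1], 0] ![1, t, 1]
          = LiebAux.mDet (2 * J 0 0) (J 0 1 + J 1 0) (2 * J 1 1) ![1 / p, 1 / q, 1 - 1 / r]
          ![B₁ ![1, 0], B₂ ![1, 0], 1] ![B₁ ![0, 1], B₂ ![0, 1], 0] ![1, 1, 1] := by
        rw [hcon.1, hcon.2]
        simp [LiebAux.mDet, LiebAux.mEntry, Fin.sum_univ_three]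
      rw [h2] at h1
      simp only [Fin.prod_univ_three, Matrix.cons_val_zero, Matrix.cons_val_one, Matrix.cons_val,
        Real.one_rpow, mul_one, one_mul] at h1
      exact absurd h1 (not_le.2 hlt)
    have := LiebAux.upper p q r hp hq hr B₁ B₂ J hJ hPD hB₁ hB₂ R.toReal hC f g hf hg hf0 hg0
      hf1 hg1
    rwa [ENNReal.ofReal_toReal hRtop] at this
  · refine sSup_le_sSup ?_
    rintro _ ⟨f, g, hf1, hg1, ⟨c₁, s, hc₁, hs, hf⟩, ⟨c₂, t, hc₂, ht, hg⟩, rfl⟩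
    have hf' : f = fun x => c₁ * Real.exp (-s * x ^ 2 / 2) := funext hf
    have hg' : g = fun x => c₂ * Real.exp (-t * x ^ 2 / 2) := funext hg
    refine ⟨f, g, by rw [hf']; fun_prop, by rw [hg']; fun_prop, fun x => ?_, fun x => ?_, hf1, hg1,
      rfl⟩
    · rw [hf]; positivity
    · rw [hg]; positivity
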